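/- arXiv:2406.01351 — 2 statements merged into one kernel-verified Lean document; each statement's English description precedes it below -/
import Mathlib

section
/- Let Ω ⊆ ℝ² be open, let ν > 0 and λ ∈ ℝ, and let u : ℝ² → ℝ² and P : ℝ² → ℝ be smooth on Ω with div u = ∂₁u₁ + ∂₂u₂ = 0 and Δu + λu = ∇P on Ω (componentwise). Suppose that v(x,t) := e^{−νλt} u(x) solves the Navier–Stokes equations on Ω × (0,∞) with some pressure, i.e. there exists q : ℝ² × ℝ → ℝ smooth on Ω × (0,∞) such that ∂ₜv + (v·∇)v = νΔₓv − ∇ₓq and divₓ v = 0 on Ω × (0,∞). Then the vorticity ω := ∂₁u₂ − ∂₂u₁ satisfies u₁∂₁ω + u₂∂₂ω = 0 on Ω. -/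
/-!
Fix one time `t` and put `c = exp (-(ν * lam * t))`. The time derivative of `v` contributes
`-ν lam c u`, which the Stokes equation `Δu + lam u = ∇P` combines with `ν c Δu` into `ν c ∇P`.
The momentum equation at time `t` therefore reads `c² (u·∇)u = ∇(ν c P - q(·, t))`, so `(u·∇)u` is
a gradient and its curl vanishes by symmetry of the second derivative of the potential. In the
plane that curl is `(u·∇)ω + (div u) ω`, and `div u = 0`.
-/

open MeasureTheory

/-- First partial derivative (with respect to the first coordinate of `ℝ × ℝ`). -/
noncomputable def pd1 (f : ℝ × ℝ → ℝ) : ℝ × ℝ → ℝ := fun x => fderiv ℝ f x (1, 0)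

/-- Second partial derivative (with respect to the second coordinate of `ℝ × ℝ`). -/
noncomputable def pd2 (f : ℝ × ℝ → ℝ) : ℝ × ℝ → ℝ := fun x => fderiv ℝ f x (0, 1)

/-- The Laplacian on `ℝ × ℝ`. -/
noncomputable def lap (f : ℝ × ℝ → ℝ) : ℝ × ℝ → ℝ := fun x => pd1 (pd1 f) x + pd2 (pd2 f) x

/-- First spatial partial derivative of a time-dependent function on `(ℝ × ℝ) × ℝ`. -/
noncomputable def pdx1 (f : (ℝ × ℝ) × ℝ → ℝ) : (ℝ × ℝ) × ℝ → ℝ :=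
  fun z => fderiv ℝ (fun y => f (y, z.2)) z.1 (1, 0)

/-- Second spatial partial derivative of a time-dependent function on `(ℝ × ℝ) × ℝ`. -/
noncomputable def pdx2 (f : (ℝ × ℝ) × ℝ → ℝ) : (ℝ × ℝ) × ℝ → ℝ :=
  fun z => fderiv ℝ (fun y => f (y, z.2)) z.1 (0, 1)

/-- Time derivative of a time-dependent function on `(ℝ × ℝ) × ℝ`. -/
noncomputable def pdt (f : (ℝ × ℝ) × ℝ → ℝ) : (ℝ × ℝ) × ℝ → ℝ :=
  fun z => deriv (fun s => f (z.1, s)) z.2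

/-- Spatial Laplacian of a time-dependent function on `(ℝ × ℝ) × ℝ`. -/
noncomputable def lapx (f : (ℝ × ℝ) × ℝ → ℝ) : (ℝ × ℝ) × ℝ → ℝ :=
  fun z => pdx1 (pdx1 f) z + pdx2 (pdx2 f) z

open Topology

/-- The divergence `∂₁u₁ + ∂₂u₂` of a planar vector field. -/
noncomputable def divergence (u : ℝ × ℝ → ℝ × ℝ) : ℝ × ℝ → ℝ :=
  fun x => pd1 (fun y => (u y).1) x + pd2 (fun y => (u y).2) x

/-- The vorticity `∂₁u₂ - ∂₂u₁` (scalar curl) of a planar vector field. -/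
noncomputable def vorticity (u : ℝ × ℝ → ℝ × ℝ) : ℝ × ℝ → ℝ :=
  fun x => pd1 (fun y => (u y).2) x - pd2 (fun y => (u y).1) x

/-- The convective derivative `(u·∇)f` of a scalar function `f` along the vector field `u`. -/
noncomputable def convect (u : ℝ × ℝ → ℝ × ℝ) (f : ℝ × ℝ → ℝ) : ℝ × ℝ → ℝ :=
  fun x => (u x).1 * pd1 f x + (u x).2 * pd2 f x

/-- The advection term `(u·∇)u` of the Navier–Stokes equations. -/
noncomputable def advection (u : ℝ × ℝ → ℝ × ℝ) : ℝ × ℝ → ℝ × ℝ :=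
  fun x => (convect u (fun y => (u y).1) x, convect u (fun y => (u y).2) x)

/-- The covector `a dx₁ + b dx₂` with coefficients `w = (a, b)`. A function with derivative
`covector (w y)` at every `y` is a potential of the vector field `w`. -/
noncomputable def covector (w : ℝ × ℝ) : ℝ × ℝ →L[ℝ] ℝ :=
  w.1 • ContinuousLinearMap.fst ℝ ℝ ℝ + w.2 • ContinuousLinearMap.snd ℝ ℝ ℝ

/-- The product `g(t) f(x)` with space and time variables separated. -/
def separated (g : ℝ → ℝ) (f : ℝ × ℝ → ℝ) : (ℝ × ℝ) × ℝ → ℝ :=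
  fun z => g z.2 * f z.1

lemma differentiableAt_fderiv_apply {E F : Type*} [NormedAddCommGroup E] [NormedSpace ℝ E]
    [NormedAddCommGroup F] [NormedSpace ℝ F] {f : E → F} {x : E} (hf : ContDiffAt ℝ 2 f x) (e : E) :
    DifferentiableAt ℝ (fun y => fderiv ℝ f y e) x :=
  ((hf.fderiv_right (m := 1) (by norm_num)).differentiableAt one_ne_zero).clm_apply
    (differentiableAt_const e)

section PlanarCalculus

variable {u w : ℝ × ℝ → ℝ × ℝ} {f : ℝ × ℝ → ℝ} {x : ℝ × ℝ}

lemma differentiableAt_pd1 (hf : ContDiffAt ℝ 2 f x) : DifferentiableAt ℝ (pd1 f) x :=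
  differentiableAt_fderiv_apply hf (1, 0)

lemma differentiableAt_pd2 (hf : ContDiffAt ℝ 2 f x) : DifferentiableAt ℝ (pd2 f) x :=
  differentiableAt_fderiv_apply hf (0, 1)

lemma hasFDerivAt_covector (hf : DifferentiableAt ℝ f x) :
    HasFDerivAt f (covector (pd1 f x, pd2 f x)) x := by
  refine hf.hasFDerivAt.congr_fderiv ?_
  ext <;> simp [covector, pd1, pd2]

lemma hasFDerivAt_covector_of_mul_eq {P q : ℝ × ℝ → ℝ} {k m : ℝ} {c : ℝ × ℝ} (hk : k ≠ 0)
    (hP : DifferentiableAt ℝ P x) (hq : DifferentiableAt ℝ q x)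
    (h₁ : k * c.1 = m * pd1 P x - pd1 q x) (h₂ : k * c.2 = m * pd2 P x - pd2 q x) :
    HasFDerivAt (fun y => k⁻¹ * (m * P y - q y)) (covector c) x := by
  rw [← eq_inv_mul_iff_mul_eq₀ hk] at h₁ h₂
  refine ((((hasFDerivAt_covector hP).const_mul m).sub
    (hasFDerivAt_covector hq)).const_mul k⁻¹).congr_fderiv ?_
  ext <;> simp [covector, h₁, h₂]

lemma vorticity_eq_zero_of_potential (hw : DifferentiableAt ℝ w x)
    (hf : ∀ᶠ y in 𝓝 x, HasFDerivAt f (covector (w y)) y) : vorticity w x = 0 := by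
  have hcov : HasFDerivAt (fun y => covector (w y)) _ x :=
    (hw.fst.hasFDerivAt.smul_const (ContinuousLinearMap.fst ℝ ℝ ℝ)).add
      (hw.snd.hasFDerivAt.smul_const (ContinuousLinearMap.snd ℝ ℝ ℝ))
  have hsymm := second_derivative_symmetric_of_eventually hf hcov (1, 0) (0, 1)
  simpa [vorticity, pd1, pd2, sub_eq_zero] using hsymm

lemma pd1_pd2_comm (hf : ContDiffAt ℝ 2 f x) : pd1 (pd2 f) x = pd2 (pd1 f) x := by
  have hgrad : DifferentiableAt ℝ (fun y => (pd1 f y, pd2 f y)) x :=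
    (differentiableAt_pd1 hf).prodMk (differentiableAt_pd2 hf)
  have hpot : ∀ᶠ y in 𝓝 x, HasFDerivAt f (covector (pd1 f y, pd2 f y)) y := by
    filter_upwards [hf.eventually (by simp)] with y hy
    exact hasFDerivAt_covector (hy.differentiableAt two_ne_zero)
  exact sub_eq_zero.1 (vorticity_eq_zero_of_potential hgrad hpot)

lemma hasFDerivAt_convect (hu : DifferentiableAt ℝ u x) (hf : ContDiffAt ℝ 2 f x) :
    HasFDerivAt (convect u f)
      (((u x).1 • fderiv ℝ (pd1 f) x + pd1 f x • fderiv ℝ (fun y => (u y).1) x) +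
        ((u x).2 • fderiv ℝ (pd2 f) x + pd2 f x • fderiv ℝ (fun y => (u y).2) x)) x :=
  (hu.fst.hasFDerivAt.mul (differentiableAt_pd1 hf).hasFDerivAt).add
    (hu.snd.hasFDerivAt.mul (differentiableAt_pd2 hf).hasFDerivAt)

lemma pd1_convect (hu : DifferentiableAt ℝ u x) (hf : ContDiffAt ℝ 2 f x) :
    pd1 (convect u f) x =
      ((u x).1 * pd1 (pd1 f) x + pd1 f x * pd1 (fun y => (u y).1) x) +
        ((u x).2 * pd1 (pd2 f) x + pd2 f x * pd1 (fun y => (u y).2) x) :=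
  DFunLike.congr_fun (hasFDerivAt_convect hu hf).fderiv (1, 0)

lemma pd2_convect (hu : DifferentiableAt ℝ u x) (hf : ContDiffAt ℝ 2 f x) :
    pd2 (convect u f) x =
      ((u x).1 * pd2 (pd1 f) x + pd1 f x * pd2 (fun y => (u y).1) x) +
        ((u x).2 * pd2 (pd2 f) x + pd2 f x * pd2 (fun y => (u y).2) x) :=
  DFunLike.congr_fun (hasFDerivAt_convect hu hf).fderiv (0, 1)

lemma differentiableAt_advection (hu : ContDiffAt ℝ 2 u x) :
    DifferentiableAt ℝ (advection u) x :=
  have hdiff := hu.differentiableAt two_ne_zero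
  (hasFDerivAt_convect hdiff hu.fst).differentiableAt.prodMk
    (hasFDerivAt_convect hdiff hu.snd).differentiableAt

lemma convect_vorticity (hu : ContDiffAt ℝ 2 u x) :
    convect u (vorticity u) x =
      (u x).1 * (pd1 (pd1 fun y => (u y).2) x - pd1 (pd2 fun y => (u y).1) x) +
        (u x).2 * (pd2 (pd1 fun y => (u y).2) x - pd2 (pd2 fun y => (u y).1) x) := by
  have hω : HasFDerivAt (vorticity u) _ x :=
    (differentiableAt_pd1 hu.snd).hasFDerivAt.sub (differentiableAt_pd2 hu.fst).hasFDerivAt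
  simp only [convect, pd1, pd2, hω.fderiv, sub_apply]

lemma vorticity_advection (hu : ContDiffAt ℝ 2 u x) :
    vorticity (advection u) x =
      convect u (vorticity u) x + divergence u x * vorticity u x := by
  have hdiff := hu.differentiableAt two_ne_zero
  change pd1 (convect u fun y => (u y).2) x - pd2 (convect u fun y => (u y).1) x = _
  rw [pd1_convect hdiff hu.snd, pd2_convect hdiff hu.fst, convect_vorticity hu,
    pd1_pd2_comm hu.fst, pd1_pd2_comm hu.snd]
  simp only [divergence, vorticity]
  ring

end PlanarCalculus

section SeparatedVariables

variable (g : ℝ → ℝ) (f : ℝ × ℝ → ℝ)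

lemma pdt_separated : pdt (separated g f) = separated (deriv g) f :=
  funext fun z => deriv_mul_const_field (f z.1)

lemma pdx1_separated : pdx1 (separated g f) = separated g (pd1 f) :=
  funext fun z =>
    DFunLike.congr_fun (congrFun (fderiv_const_smul_field (f := f) (g z.2)) z.1) (1, 0)

lemma pdx2_separated : pdx2 (separated g f) = separated g (pd2 f) :=
  funext fun z =>
    DFunLike.congr_fun (congrFun (fderiv_const_smul_field (f := f) (g z.2)) z.1) (0, 1)

lemma lapx_separated : lapx (separated g f) = separated g (lap f) := by
  funext z
  simp only [lapx, lap, pdx1_separated, pdx2_separated, separated, mul_add]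

end SeparatedVariables

lemma sq_mul_convect_eq_of_momentum {ν lam t p r : ℝ} {g : ℝ → ℝ} {u : ℝ × ℝ → ℝ × ℝ}
    {f : ℝ × ℝ → ℝ} {x : ℝ × ℝ} (hg : deriv g t = -(ν * lam) * g t)
    (hStokes : lap f x + lam * f x = p)
    (hNS : pdt (separated g f) (x, t) + (g t * (u x).1 * pdx1 (separated g f) (x, t) +
        g t * (u x).2 * pdx2 (separated g f) (x, t)) = ν * lapx (separated g f) (x, t) - r) :
    g t ^ 2 * convect u f x = ν * g t * p - r := by
  simp only [pdt_separated, pdx1_separated, pdx2_separated, lapx_separated, separated, hg] at hNS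
  rw [convect]
  linear_combination hNS + ν * g t * hStokes

lemma deriv_exp_neg_mul (κ t : ℝ) :
    deriv (fun s => Real.exp (-(κ * s))) t = -κ * Real.exp (-(κ * t)) := by
  simpa [mul_comm] using ((hasDerivAt_id t).const_mul κ).neg.exp.deriv

theorem stmt14_general {Ω : Set (ℝ × ℝ)} (hΩ : IsOpen Ω) {ν lam t : ℝ} {u : ℝ × ℝ → ℝ × ℝ}
    {P q : ℝ × ℝ → ℝ} (hu : ContDiffOn ℝ 2 u Ω) (hP : DifferentiableOn ℝ P Ω)
    (hq : DifferentiableOn ℝ q Ω) (hdiv : ∀ x ∈ Ω, divergence u x = 0)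
    (hStokes : ∀ x ∈ Ω,
      lap (fun y => (u y).1) x + lam * (u x).1 = pd1 P x ∧
      lap (fun y => (u y).2) x + lam * (u x).2 = pd2 P x)
    {v : (ℝ × ℝ) × ℝ → ℝ × ℝ} (hv : v = fun z => Real.exp (-(ν * lam * z.2)) • u z.1)
    (hNS : ∀ x ∈ Ω,
      pdt (fun w => (v w).1) (x, t) + ((v (x, t)).1 * pdx1 (fun w => (v w).1) (x, t) +
          (v (x, t)).2 * pdx2 (fun w => (v w).1) (x, t)) =
        ν * lapx (fun w => (v w).1) (x, t) - pd1 q x ∧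
      pdt (fun w => (v w).2) (x, t) + ((v (x, t)).1 * pdx1 (fun w => (v w).2) (x, t) +
          (v (x, t)).2 * pdx2 (fun w => (v w).2) (x, t)) =
        ν * lapx (fun w => (v w).2) (x, t) - pd2 q x) :
    ∀ x ∈ Ω, convect u (vorticity u) x = 0 := by
  subst hv
  intro x hx
  let g : ℝ → ℝ := fun s => Real.exp (-(ν * lam * s))
  have hdecay : deriv g t = -(ν * lam) * g t := deriv_exp_neg_mul (ν * lam) t
  have hpot : ∀ y ∈ Ω, HasFDerivAt (fun z => (g t ^ 2)⁻¹ * (ν * g t * P z - q z))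
      (covector (advection u y)) y := fun y hy =>
    hasFDerivAt_covector_of_mul_eq (pow_ne_zero 2 (Real.exp_ne_zero _))
      (hP.differentiableAt (hΩ.mem_nhds hy)) (hq.differentiableAt (hΩ.mem_nhds hy))
      (sq_mul_convect_eq_of_momentum (g := g) hdecay (hStokes y hy).1 (hNS y hy).1)
      (sq_mul_convect_eq_of_momentum (g := g) hdecay (hStokes y hy).2 (hNS y hy).2)
  have hux : ContDiffAt ℝ 2 u x := hu.contDiffAt (hΩ.mem_nhds hx)
  have hcurl : vorticity (advection u) x = 0 :=
    vorticity_eq_zero_of_potential (differentiableAt_advection hux)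
      (Filter.eventually_of_mem (hΩ.mem_nhds hx) hpot)
  simpa [vorticity_advection hux, hdiv x hx] using hcurl

theorem stmt14 (Ω : Set (ℝ × ℝ)) (hΩ : IsOpen Ω) (ν lam : ℝ) (hν : 0 < ν)
    (u : ℝ × ℝ → ℝ × ℝ) (P : ℝ × ℝ → ℝ)
    (hu : ContDiffOn ℝ (⊤ : ℕ∞) u Ω) (hP : ContDiffOn ℝ (⊤ : ℕ∞) P Ω)
    (hdiv : ∀ x ∈ Ω, pd1 (fun y => (u y).1) x + pd2 (fun y => (u y).2) x = 0)
    (heq : ∀ x ∈ Ω,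
      lap (fun y => (u y).1) x + lam * (u x).1 = pd1 P x ∧
      lap (fun y => (u y).2) x + lam * (u x).2 = pd2 P x)
    (v : (ℝ × ℝ) × ℝ → ℝ × ℝ)
    (hv : v = fun z => Real.exp (-(ν * lam * z.2)) • u z.1)
    (hNS : ∃ q : (ℝ × ℝ) × ℝ → ℝ, ContDiffOn ℝ (⊤ : ℕ∞) q (Ω ×ˢ Set.Ioi (0 : ℝ)) ∧
      (∀ z ∈ Ω ×ˢ Set.Ioi (0 : ℝ),
        (pdt (fun w => (v w).1) z +
            ((v z).1 * pdx1 (fun w => (v w).1) z + (v z).2 * pdx2 (fun w => (v w).1) z) =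
          ν * lapx (fun w => (v w).1) z - pdx1 q z) ∧
        (pdt (fun w => (v w).2) z +
            ((v z).1 * pdx1 (fun w => (v w).2) z + (v z).2 * pdx2 (fun w => (v w).2) z) =
          ν * lapx (fun w => (v w).2) z - pdx2 q z)) ∧
      ∀ z ∈ Ω ×ˢ Set.Ioi (0 : ℝ),
        pdx1 (fun w => (v w).1) z + pdx2 (fun w => (v w).2) z = 0)
    (ω : ℝ × ℝ → ℝ)
    (hω : ω = fun x => pd1 (fun y => (u y).2) x - pd2 (fun y => (u y).1) x) :
    ∀ x ∈ Ω, (u x).1 * pd1 ω x + (u x).2 * pd2 ω x = 0 := by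
  obtain ⟨q, hq, hmomentum, -⟩ := hNS
  have hq₁ : DifferentiableOn ℝ (fun y => q (y, 1)) Ω :=
    (hq.differentiableOn (by simp)).comp (by fun_prop) fun y hy => ⟨hy, Set.mem_Ioi.2 one_pos⟩
  exact hω ▸ stmt14_general hΩ (contDiffOn_infty.1 hu 2) (hP.differentiableOn (by simp)) hq₁ hdiv
    heq hv fun x hx => hmomentum (x, 1) ⟨hx, Set.mem_Ioi.2 one_pos⟩
end

section
/- Let Ω ⊆ ℝ² be open, bounded and connected, let λ ∈ ℝ, let ψ : ℝ² → ℝ and p : ℝ² → ℝ be smooth on Ω, set u = (∂₂ψ, −∂₁ψ), and assume Δu + λu = ∇p and div u = ∂₁u₁ + ∂₂u₂ = 0 on Ω. Set h := Δψ + λψ and assume there is a function H : ℝ² → ℝ, continuous on the closure of Ω, with H = h on Ω. Then ∇p = 0 on Ω if and only if H is constant on the frontier of Ω. -/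
open MeasureTheory

/-!
Since `Δ` commutes with `∂₁` and `∂₂`, the Stokes system for `u = (∂₂ψ, -∂₁ψ)` reads `∂₁p = ∂₂h`,
`∂₂p = -∂₁h`. These are the Cauchy–Riemann equations: `p + i h` is holomorphic in `x₁ + i x₂`, and
`∇p = 0` is the same as `∇h = 0`, that is, `h` is constant on the connected set `Ω`.

If `h` is constant on `Ω`, so is its continuous extension `H` on the closure. Conversely, let `H` be
constant on the frontier. Either its maximum and its minimum over the compact closure are both
attained on the frontier, and then they agree, or one of them is attained inside `Ω`, and then `h`
is constant by the maximum modulus principle for `exp (∓ i (p + i h))`, whose modulus is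
`exp (± h)`.
-/

open Filter Set Topology

section DirectionalDerivative

variable {E F : Type*} [NormedAddCommGroup E] [NormedSpace ℝ E] [NormedAddCommGroup F]
  [NormedSpace ℝ F] {f g : E → F} {x : E}

/-- The derivative of `f` in the direction `v`. It unfolds to `pd1` for `v = (1, 0)` and to `pd2`
for `v = (0, 1)`, so that its properties apply to both partial derivatives. -/
noncomputable def dirDeriv (v : E) (f : E → F) : E → F := fun x => fderiv ℝ f x v

lemma contDiffAt_dirDeriv {m n : WithTop ℕ∞} (hf : ContDiffAt ℝ n f x) (hmn : m + 1 ≤ n) (v : E) :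
    ContDiffAt ℝ m (dirDeriv v f) x :=
  (hf.fderiv_right hmn).clm_apply contDiffAt_const

lemma differentiableAt_dirDeriv_dirDeriv (hf : ContDiffAt ℝ 3 f x) (v w : E) :
    DifferentiableAt ℝ (dirDeriv v (dirDeriv w f)) x := by
  have hw : ContDiffAt ℝ 2 (dirDeriv w f) x := contDiffAt_dirDeriv hf (by norm_num) w
  have hvw : ContDiffAt ℝ 1 (dirDeriv v (dirDeriv w f)) x :=
    contDiffAt_dirDeriv hw (by norm_num) v
  exact hvw.differentiableAt (by simp)

lemma dirDeriv_congr (hfg : f =ᶠ[𝓝 x] g) (v : E) : dirDeriv v f x = dirDeriv v g x :=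
  congrArg (fun A : E →L[ℝ] F => A v) hfg.fderiv_eq

lemma dirDeriv_add (hf : DifferentiableAt ℝ f x) (hg : DifferentiableAt ℝ g x) (v : E) :
    dirDeriv v (fun y => f y + g y) x = dirDeriv v f x + dirDeriv v g x :=
  congrArg (fun A : E →L[ℝ] F => A v) (fderiv_fun_add hf hg)

lemma dirDeriv_neg (f : E → F) (v : E) :
    dirDeriv v (fun y => -f y) = fun y => -dirDeriv v f y :=
  funext fun _ => congrArg (fun A : E →L[ℝ] F => A v) fderiv_fun_neg

lemma dirDeriv_const_smul (hf : DifferentiableAt ℝ f x) (c : ℝ) (v : E) :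
    dirDeriv v (fun y => c • f y) x = c • dirDeriv v f x :=
  congrArg (fun A : E →L[ℝ] F => A v) (fderiv_fun_const_smul hf c)

lemma dirDeriv_dirDeriv (hf : ContDiffAt ℝ 2 f x) (v w : E) :
    dirDeriv v (dirDeriv w f) x = fderiv ℝ (fderiv ℝ f) x v w := by
  have hdf : DifferentiableAt ℝ (fderiv ℝ f) x :=
    (hf.fderiv_right (m := 1) (by norm_num)).differentiableAt (by simp)
  change fderiv ℝ (fun y => fderiv ℝ f y w) x v = _
  simp [fderiv_clm_apply hdf (differentiableAt_const w)]

lemma dirDeriv_comm (hf : ContDiffAt ℝ 2 f x) (v w : E) :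
    dirDeriv v (dirDeriv w f) x = dirDeriv w (dirDeriv v f) x := by
  rw [dirDeriv_dirDeriv hf, dirDeriv_dirDeriv hf]
  exact hf.isSymmSndFDerivAt (by simp) v w

lemma dirDeriv_dirDeriv_dirDeriv_comm (hf : ContDiffAt ℝ 3 f x) (v w : E) :
    dirDeriv v (dirDeriv w (dirDeriv w f)) x = dirDeriv w (dirDeriv w (dirDeriv v f)) x := by
  have hf₂ : ∀ᶠ y in 𝓝 x, ContDiffAt ℝ 2 f y := (hf.of_le (by norm_num)).eventually (by simp)
  calc dirDeriv v (dirDeriv w (dirDeriv w f)) x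
      = dirDeriv w (dirDeriv v (dirDeriv w f)) x :=
        dirDeriv_comm (contDiffAt_dirDeriv hf (by norm_num) w) v w
    _ = dirDeriv w (dirDeriv w (dirDeriv v f)) x :=
        dirDeriv_congr (hf₂.mono fun _ hy => dirDeriv_comm hy v w) w

end DirectionalDerivative

section Plane

variable {f : ℝ × ℝ → ℝ} {x : ℝ × ℝ}

lemma fderiv_eq_zero_iff_pd_eq_zero : fderiv ℝ f x = 0 ↔ pd1 f x = 0 ∧ pd2 f x = 0 := by
  refine ⟨fun hf => by simp [pd1, pd2, hf], fun ⟨h₁, h₂⟩ => ?_⟩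
  ext
  · simpa [pd1] using h₁
  · simpa [pd2] using h₂

lemma differentiableAt_lap (hf : ContDiffAt ℝ 3 f x) : DifferentiableAt ℝ (lap f) x :=
  (differentiableAt_dirDeriv_dirDeriv hf (1, 0) (1, 0)).add
    (differentiableAt_dirDeriv_dirDeriv hf (0, 1) (0, 1))

lemma dirDeriv_lap (hf : ContDiffAt ℝ 3 f x) (v : ℝ × ℝ) :
    dirDeriv v (lap f) x = lap (dirDeriv v f) x := by
  refine (dirDeriv_add (differentiableAt_dirDeriv_dirDeriv hf (1, 0) (1, 0))
    (differentiableAt_dirDeriv_dirDeriv hf (0, 1) (0, 1)) v).trans ?_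
  rw [dirDeriv_dirDeriv_dirDeriv_comm hf, dirDeriv_dirDeriv_dirDeriv_comm hf]
  rfl

lemma lap_neg (f : ℝ × ℝ → ℝ) (x : ℝ × ℝ) : lap (fun y => -f y) x = -lap f x := by
  change dirDeriv (1, 0) (dirDeriv (1, 0) _) x + dirDeriv (0, 1) (dirDeriv (0, 1) _) x =
    -(dirDeriv (1, 0) (dirDeriv (1, 0) f) x + dirDeriv (0, 1) (dirDeriv (0, 1) f) x)
  simp only [dirDeriv_neg, neg_add]

lemma dirDeriv_lap_add_const_mul (hf : ContDiffAt ℝ 3 f x) (c : ℝ) (v : ℝ × ℝ) :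
    dirDeriv v (fun y => lap f y + c * f y) x = lap (dirDeriv v f) x + c * dirDeriv v f x := by
  have hfx : DifferentiableAt ℝ f x := hf.differentiableAt (by simp)
  rw [dirDeriv_add (differentiableAt_lap hf) (hfx.const_mul c), dirDeriv_lap hf]
  exact congrArg (_ + ·) (dirDeriv_const_smul hfx c v)

end Plane

section ExtremumPrinciple

lemma exists_eqOn_const_of_frontier {X α : Type*} [TopologicalSpace X] [TopologicalSpace α]
    [LinearOrder α] [OrderClosedTopology α] {s : Set X} {H : X → α} (hs : IsOpen s)
    (hcpt : IsCompact (closure s)) (hH : ContinuousOn H (closure s))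
    (hext : ∀ x ∈ s, IsExtrOn H s x → ∀ y ∈ s, H y = H x) {c : α}
    (hc : ∀ x ∈ frontier s, H x = c) : ∃ d, ∀ x ∈ s, H x = d := by
  rcases s.eq_empty_or_nonempty with rfl | hne
  · exact ⟨c, by simp⟩
  obtain ⟨a, ha, hmin⟩ := hcpt.exists_isMinOn hne.closure hH
  obtain ⟨b, hb, hmax⟩ := hcpt.exists_isMaxOn hne.closure hH
  by_cases has : a ∈ s
  · exact ⟨H a, hext a has (.inl (hmin.on_subset subset_closure))⟩
  by_cases hbs : b ∈ s
  · exact ⟨H b, hext b hbs (.inr (hmax.on_subset subset_closure))⟩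
  have hac : H a = c := hc a (hs.frontier_eq ▸ ⟨ha, has⟩)
  have hbc : H b = c := hc b (hs.frontier_eq ▸ ⟨hb, hbs⟩)
  exact ⟨c, fun x hx => le_antisymm (hbc ▸ hmax (subset_closure hx))
    (hac ▸ hmin (subset_closure hx))⟩

variable {E : Type*} [NormedAddCommGroup E] [NormedSpace ℂ E] {f : E → ℂ} {U : Set E} {a : E}

lemma im_eq_of_isMaxOn_im (hU : IsOpen U) (hconn : IsPreconnected U) (hf : DifferentiableOn ℂ f U)
    (ha : a ∈ U) (hmax : IsMaxOn (fun z => (f z).im) U a) : ∀ z ∈ U, (f z).im = (f a).im := by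
  have hnorm (z : E) : ‖Complex.exp (-Complex.I * f z)‖ = Real.exp (f z).im := by
    rw [Complex.norm_exp]; simp
  have hmax' : IsMaxOn (norm ∘ fun z => Complex.exp (-Complex.I * f z)) U a := fun z hz => by
    simpa only [Function.comp_apply, mem_ofPred_eq, hnorm, Real.exp_le_exp] using hmax hz
  intro z hz
  have heq := Complex.norm_eqOn_of_isPreconnected_of_isMaxOn hconn hU
    (hf.const_mul (-Complex.I)).cexp ha hmax' hz
  simpa only [Function.comp_apply, Function.const_apply, hnorm, Real.exp_eq_exp] using heq

lemma im_eq_of_isExtrOn_im (hU : IsOpen U) (hconn : IsPreconnected U) (hf : DifferentiableOn ℂ f U)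
    (ha : a ∈ U) (hext : IsExtrOn (fun z => (f z).im) U a) : ∀ z ∈ U, (f z).im = (f a).im := by
  rcases hext with hmin | hmax
  · intro z hz
    simpa using im_eq_of_isMaxOn_im hU hconn hf.neg ha hmin.neg z hz
  · exact im_eq_of_isMaxOn_im hU hconn hf ha hmax

end ExtremumPrinciple

lemma forall_fderiv_eq_zero_iff_exists_const {E F : Type*} [NormedAddCommGroup E]
    [NormedSpace ℝ E] [NormedAddCommGroup F] [NormedSpace ℝ F] {s : Set E} {f : E → F}
    (hs : IsOpen s) (hconn : IsPreconnected s) (hf : DifferentiableOn ℝ f s) :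
    (∀ x ∈ s, fderiv ℝ f x = 0) ↔ ∃ c, ∀ x ∈ s, f x = c := by
  refine ⟨hs.exists_is_const_of_fderiv_eq_zero hconn hf, ?_⟩
  rintro ⟨c, hc⟩ x hx
  rw [(eventuallyEq_of_mem (hs.mem_nhds hx) hc).fderiv_eq, fderiv_fun_const, Pi.zero_apply]

/-- The Cauchy–Riemann equations for the pair `(a, b)` on `Ω`, which say that `a + i b` is a
holomorphic function of `x₁ + i x₂`. -/
structure CauchyRiemannOn (a b : ℝ × ℝ → ℝ) (Ω : Set (ℝ × ℝ)) : Prop where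
  differentiableOn_re : DifferentiableOn ℝ a Ω
  differentiableOn_im : DifferentiableOn ℝ b Ω
  pd1_re : ∀ x ∈ Ω, pd1 a x = pd2 b x
  pd2_re : ∀ x ∈ Ω, pd2 a x = -pd1 b x

/-- The function `a + i b` of the complex variable `x₁ + i x₂`. -/
noncomputable def toComplexFun (a b : ℝ × ℝ → ℝ) (z : ℂ) : ℂ :=
  Complex.equivRealProdCLM.symm (a (Complex.equivRealProdCLM z), b (Complex.equivRealProdCLM z))

namespace CauchyRiemannOn

variable {a b : ℝ × ℝ → ℝ} {Ω : Set (ℝ × ℝ)}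

lemma fderiv_re_eq_zero_iff (hab : CauchyRiemannOn a b Ω) {x : ℝ × ℝ} (hx : x ∈ Ω) :
    fderiv ℝ a x = 0 ↔ fderiv ℝ b x = 0 := by
  rw [fderiv_eq_zero_iff_pd_eq_zero, fderiv_eq_zero_iff_pd_eq_zero, hab.pd1_re x hx,
    hab.pd2_re x hx, neg_eq_zero, and_comm]

lemma differentiableOn_toComplexFun (hab : CauchyRiemannOn a b Ω) (hΩ : IsOpen Ω) :
    DifferentiableOn ℂ (toComplexFun a b) (Complex.equivRealProdCLM ⁻¹' Ω) := by
  intro z hz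
  let e := Complex.equivRealProdCLM
  have ha := (hab.differentiableOn_re.differentiableAt (hΩ.mem_nhds hz)).hasFDerivAt
  have hb := (hab.differentiableOn_im.differentiableAt (hΩ.mem_nhds hz)).hasFDerivAt
  have hF : HasFDerivAt (toComplexFun a b) _ z :=
    e.symm.hasFDerivAt.comp z ((ha.prodMk hb).comp z e.hasFDerivAt)
  have hF_one : fderiv ℝ (toComplexFun a b) z 1 = ⟨pd1 a (e z), pd1 b (e z)⟩ := by
    rw [hF.fderiv]; rfl
  have hF_I : fderiv ℝ (toComplexFun a b) z Complex.I = ⟨pd2 a (e z), pd2 b (e z)⟩ := by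
    rw [hF.fderiv]; rfl
  refine (differentiableAt_complex_iff_differentiableAt_real.2
    ⟨hF.differentiableAt, ?_⟩).differentiableWithinAt
  rw [hF_one, hF_I, hab.pd1_re _ hz, hab.pd2_re _ hz]
  apply Complex.ext <;> simp [e]

lemma im_eq_of_isExtrOn (hab : CauchyRiemannOn a b Ω) (hΩ : IsOpen Ω) (hconn : IsPreconnected Ω)
    {x : ℝ × ℝ} (hx : x ∈ Ω) (hext : IsExtrOn b Ω x) : ∀ y ∈ Ω, b y = b x := by
  let e := Complex.equivRealProdCLM
  have hext' : IsExtrOn (fun z => (toComplexFun a b z).im) (e ⁻¹' Ω) (e.symm x) :=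
    hext.on_preimage e
  exact fun y hy => im_eq_of_isExtrOn_im (hΩ.preimage e.continuous)
    (e.toHomeomorph.isPreconnected_preimage.2 hconn) (hab.differentiableOn_toComplexFun hΩ)
    hx hext' (e.symm y) hy

theorem exists_const_iff_exists_frontier_const (hab : CauchyRiemannOn a b Ω) (hΩ : IsOpen Ω)
    (hbd : Bornology.IsBounded Ω) (hconn : IsPreconnected Ω) {H : ℝ × ℝ → ℝ}
    (hH : ContinuousOn H (closure Ω)) (hHb : EqOn H b Ω) :
    (∃ c, ∀ x ∈ Ω, b x = c) ↔ ∃ c, ∀ x ∈ frontier Ω, H x = c := by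
  constructor
  · rintro ⟨c, hc⟩
    have hHc : EqOn H (fun _ => c) (closure Ω) :=
      EqOn.of_subset_closure (fun x hx => (hHb hx).trans (hc x hx)) hH continuousOn_const
        subset_closure subset_rfl
    exact ⟨c, fun x hx => hHc (frontier_subset_closure hx)⟩
  · rintro ⟨c, hc⟩
    have hext : ∀ x ∈ Ω, IsExtrOn H Ω x → ∀ y ∈ Ω, H y = H x := fun x hx hHx y hy => by
      rw [hHb hx, hHb hy]
      exact hab.im_eq_of_isExtrOn hΩ hconn hx (hHx.congr hHb (hHb hx)) y hy
    obtain ⟨d, hd⟩ := exists_eqOn_const_of_frontier hΩ hbd.isCompact_closure hH hext hc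
    exact ⟨d, fun x hx => (hHb hx).symm.trans (hd x hx)⟩

end CauchyRiemannOn

lemma cauchyRiemannOn_of_stokes {Ω : Set (ℝ × ℝ)} (hΩ : IsOpen Ω) {lam : ℝ} {ψ p : ℝ × ℝ → ℝ}
    (hψ : ContDiffOn ℝ 3 ψ Ω) (hp : DifferentiableOn ℝ p Ω)
    (heq : ∀ x ∈ Ω, lap (pd2 ψ) x + lam * pd2 ψ x = pd1 p x ∧
      lap (fun y => -pd1 ψ y) x + lam * -pd1 ψ x = pd2 p x) :
    CauchyRiemannOn p (fun x => lap ψ x + lam * ψ x) Ω := by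
  have hψx {x : ℝ × ℝ} (hx : x ∈ Ω) : ContDiffAt ℝ 3 ψ x := hψ.contDiffAt (hΩ.mem_nhds hx)
  refine ⟨hp, fun x hx => ?_, fun x hx => ?_, fun x hx => ?_⟩
  · exact ((differentiableAt_lap (hψx hx)).add
      (((hψx hx).differentiableAt (by simp)).const_mul lam)).differentiableWithinAt
  · exact (heq x hx).1.symm.trans (dirDeriv_lap_add_const_mul (hψx hx) lam (0, 1)).symm
  · have hpd1 : pd1 (fun y => lap ψ y + lam * ψ y) x = lap (pd1 ψ) x + lam * pd1 ψ x :=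
      dirDeriv_lap_add_const_mul (hψx hx) lam (1, 0)
    rw [hpd1, ← (heq x hx).2, lap_neg]
    ring

theorem stmt17_general (Ω : Set (ℝ × ℝ)) (hΩ : IsOpen Ω) (hbd : Bornology.IsBounded Ω)
    (hconn : IsPreconnected Ω) (lam : ℝ)
    (ψ : ℝ × ℝ → ℝ) (p : ℝ × ℝ → ℝ)
    (hψ : ContDiffOn ℝ 3 ψ Ω) (hp : DifferentiableOn ℝ p Ω)
    (u : ℝ × ℝ → ℝ × ℝ) (hu : u = fun x => (pd2 ψ x, -pd1 ψ x))
    (heq : ∀ x ∈ Ω,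
      lap (fun y => (u y).1) x + lam * (u x).1 = pd1 p x ∧
      lap (fun y => (u y).2) x + lam * (u x).2 = pd2 p x)
    (h : ℝ × ℝ → ℝ) (hh : h = fun x => lap ψ x + lam * ψ x)
    (H : ℝ × ℝ → ℝ) (hHcont : ContinuousOn H (closure Ω))
    (hHh : ∀ x ∈ Ω, H x = h x) :
    (∀ x ∈ Ω, pd1 p x = 0 ∧ pd2 p x = 0) ↔ (∃ c : ℝ, ∀ x ∈ frontier Ω, H x = c) := by
  have hph : CauchyRiemannOn p h Ω := by
    subst hu hh
    exact cauchyRiemannOn_of_stokes hΩ hψ hp heq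
  calc (∀ x ∈ Ω, pd1 p x = 0 ∧ pd2 p x = 0)
      ↔ ∀ x ∈ Ω, fderiv ℝ h x = 0 := forall₂_congr fun _ hx =>
        fderiv_eq_zero_iff_pd_eq_zero.symm.trans (hph.fderiv_re_eq_zero_iff hx)
    _ ↔ ∃ c, ∀ x ∈ Ω, h x = c :=
        forall_fderiv_eq_zero_iff_exists_const hΩ hconn hph.differentiableOn_im
    _ ↔ ∃ c, ∀ x ∈ frontier Ω, H x = c :=
        hph.exists_const_iff_exists_frontier_const hΩ hbd hconn hHcont hHh

theorem stmt17 (Ω : Set (ℝ × ℝ)) (hΩ : IsOpen Ω) (hbd : Bornology.IsBounded Ω)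
    (hconn : IsConnected Ω) (lam : ℝ)
    (ψ : ℝ × ℝ → ℝ) (p : ℝ × ℝ → ℝ)
    (hψ : ContDiffOn ℝ (⊤ : ℕ∞) ψ Ω) (hp : ContDiffOn ℝ (⊤ : ℕ∞) p Ω)
    (u : ℝ × ℝ → ℝ × ℝ) (hu : u = fun x => (pd2 ψ x, - pd1 ψ x))
    (heq : ∀ x ∈ Ω,
      lap (fun y => (u y).1) x + lam * (u x).1 = pd1 p x ∧
      lap (fun y => (u y).2) x + lam * (u x).2 = pd2 p x)
    (hdiv : ∀ x ∈ Ω, pd1 (fun y => (u y).1) x + pd2 (fun y => (u y).2) x = 0)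
    (h : ℝ × ℝ → ℝ) (hh : h = fun x => lap ψ x + lam * ψ x)
    (H : ℝ × ℝ → ℝ) (hHcont : ContinuousOn H (closure Ω))
    (hHh : ∀ x ∈ Ω, H x = h x) :
    (∀ x ∈ Ω, pd1 p x = 0 ∧ pd2 p x = 0) ↔ (∃ c : ℝ, ∀ x ∈ frontier Ω, H x = c) :=
  stmt17_general Ω hΩ hbd hconn.isPreconnected lam ψ p (contDiffOn_infty.1 hψ 3)
    (hp.differentiableOn (by simp)) u hu heq h hh H hHcont hHh
end
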